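/- Let L ⊂ K be d-dimensional simplicial complexes and let γ = ∂σ for a d-simplex σ ∉ L, with γ null-homologous in K but not in L. Then the effective capacitance satisfies C_γ(L, K) = O( n₀ · λ_min(L_{d-1}[L ∪ {σ}])^{-1} ), where n₀ is the number of vertices of K. -/

import Mathlib

/-!
The constant is `C = 1`. Write `M = L ∪ {σ}`, `λ` for the spectral gap of its combinatorial
Laplacian, and `∂[·]`, `δ[·]` for the top boundary and coboundary maps.

Since `γ = ∂σ` does not bound in `L`, its component orthogonal to the image of `∂[L]` is nonzero, and
after rescaling it is a unit `γ`-potential `p` (`SComplex.exists_residual_potential`). It differs from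
a multiple of `γ` by a boundary of `L`, so it lies in the image of `∂[M]`. As `∂ ∂ = 0`, the
down-Laplacian of `M` kills `p`, and `p` is orthogonal to the kernel of the combinatorial Laplacian;
the Rayleigh bound gives `λ ‖p‖² ≤ ‖δ[M] p‖²` (`SComplex.specGap_combLap_bound`). But `δ[M] p` is the
indicator of `σ` (`SComplex.insertSimplex_energy`), so `‖p‖² ≤ λ⁻¹`. Finally
`‖δ[K] p‖² ≤ n₀ ‖p‖²` (`SComplex.cobdry_energy_le`).

Both `∂ ∂ = 0` and the last inequality come from one identity. On functions on all finite vertex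
sets, `∂ + δ` over a set `U` of vertices is multiplication by `∑ v ∈ U, e_v` in a Clifford algebra with
orthonormal generators, hence `(∂ + δ)² = |U|` (`cliff_cliff`). Taking the component two dimensions up
gives `δ δ = 0`; symmetry of `∂ + δ` gives `‖(∂ + δ) f‖² = |U| ‖f‖²`, and for `f` concentrated in one
dimension `δ f` is a component of `(∂ + δ) f`.
-/

open Matrix

/-- An abstract simplicial complex on vertex set `V`: a finite, downward-closed
family of nonempty finite subsets of `V`. -/
structure SComplex (V : Type) where
  faces : Finset (Finset V)
  down_closed : ∀ s ∈ faces, ∀ t ⊆ s, t.Nonempty → t ∈ faces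

/-- The index type of `d`-dimensional simplices (i.e. `(d+1)`-element subsets) on `V`. -/
abbrev SimpIdx (V : Type) (d : ℕ) := {s : Finset V // s.card = d + 1}

variable {V : Type} [Fintype V] [LinearOrder V]

/-- The signed incidence coefficient of the boundary operator: for `τ ⊆ σ` of
codimension one it is `(-1)ⁱ` where `i` is the position of the removed vertex. -/
def bsign (τ σ : Finset V) : ℤ :=
  if τ ⊆ σ ∧ τ.card + 1 = σ.card then
    (-1 : ℤ) ^ (σ.filter (fun w => ∃ v ∈ σ \ τ, w < v)).card
  else 0

/-- The global integral boundary matrix `∂_{d+1}` from `(d+1)`-dimensional to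
`d`-dimensional simplices on the vertex set `V`. -/
def gbdryZ (V : Type) [Fintype V] [LinearOrder V] (d : ℕ) :
    Matrix (SimpIdx V d) (SimpIdx V (d + 1)) ℤ :=
  fun τ σ => bsign (τ : Finset V) (σ : Finset V)

/-- The global real boundary matrix. -/
noncomputable def gbdry (V : Type) [Fintype V] [LinearOrder V] (d : ℕ) :
    Matrix (SimpIdx V d) (SimpIdx V (d + 1)) ℝ :=
  (gbdryZ V d).map (fun z => (z : ℝ))

/-- Diagonal 0/1 matrix indicating membership of simplices in the complex `K`. -/
noncomputable def SComplex.ind (K : SComplex V) (d : ℕ) :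
    Matrix (SimpIdx V d) (SimpIdx V d) ℝ :=
  Matrix.diagonal fun σ => if (σ : Finset V) ∈ K.faces then (1 : ℝ) else 0

/-- The boundary matrix `∂_{d+1}[K]` of the complex `K` (rows and columns outside
`K` are zero). -/
noncomputable def SComplex.bdry (K : SComplex V) (d : ℕ) :
    Matrix (SimpIdx V d) (SimpIdx V (d + 1)) ℝ :=
  K.ind d * gbdry V d * K.ind (d + 1)

/-- A chain is supported on the complex `K`. -/
def SComplex.supportedOn (K : SComplex V) {d : ℕ} (f : SimpIdx V d → ℝ) : Prop :=
  ∀ σ : SimpIdx V d, f σ ≠ 0 → (σ : Finset V) ∈ K.faces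

/-- A `d`-dimensional chain is a cycle (its boundary vanishes; every `0`-chain is a cycle). -/
def IsCycle (V : Type) [Fintype V] [LinearOrder V] : (d : ℕ) → (SimpIdx V d → ℝ) → Prop
  | 0, _ => True
  | (d + 1), γ => gbdry V d *ᵥ γ = 0

/-- A `d`-dimensional cycle `γ` is null-homologous in `K` iff it is the boundary of a
`(d+1)`-chain of `K` (a unit `γ`-flow). -/
def SComplex.NullHomologous (K : SComplex V) (d : ℕ) (γ : SimpIdx V d → ℝ) : Prop :=
  ∃ f : SimpIdx V (d + 1) → ℝ, K.supportedOn f ∧ gbdry V d *ᵥ f = γ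

/-- The weighted effective resistance of `γ` in `K`: the infimum of flow energies
`∑ f(σ)²/w(σ)` over unit `γ`-flows `f` in `K`. -/
noncomputable def SComplex.effResW (K : SComplex V) (d : ℕ)
    (w : SimpIdx V (d + 1) → ℝ) (γ : SimpIdx V d → ℝ) : ℝ :=
  sInf {E : ℝ | ∃ f : SimpIdx V (d + 1) → ℝ, K.supportedOn f ∧ gbdry V d *ᵥ f = γ ∧
    E = ∑ σ : SimpIdx V (d + 1), f σ ^ 2 / w σ}

/-- Unweighted effective resistance. -/
noncomputable def SComplex.effRes (K : SComplex V) (d : ℕ) (γ : SimpIdx V d → ℝ) : ℝ :=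
  K.effResW d (fun _ => 1) γ

/-- The weighted up-Laplacian `L^{up,W} = ∂ W ∂ᵀ` of `K` acting on `d`-chains. -/
noncomputable def SComplex.upLapW (K : SComplex V) (d : ℕ) (w : SimpIdx V (d + 1) → ℝ) :
    Matrix (SimpIdx V d) (SimpIdx V d) ℝ :=
  K.bdry d * Matrix.diagonal w * (K.bdry d)ᵀ

/-- The (unweighted) up-Laplacian `L^{up} = ∂ ∂ᵀ` of `K` acting on `d`-chains. -/
noncomputable def SComplex.upLap (K : SComplex V) (d : ℕ) :
    Matrix (SimpIdx V d) (SimpIdx V d) ℝ :=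
  K.bdry d * (K.bdry d)ᵀ

/-- The down-Laplacian `L^{down} = ∂ᵀ ∂` of `K` acting on `d`-chains (zero on `0`-chains). -/
noncomputable def SComplex.downLap (K : SComplex V) :
    (d : ℕ) → Matrix (SimpIdx V d) (SimpIdx V d) ℝ
  | 0 => 0
  | (d + 1) => (K.bdry d)ᵀ * K.bdry d

/-- The combinatorial Laplacian `L = L^{up} + L^{down}`. -/
noncomputable def SComplex.combLap (K : SComplex V) (d : ℕ) :
    Matrix (SimpIdx V d) (SimpIdx V d) ℝ :=
  K.upLap d + K.downLap d

/-- `X` is the Moore–Penrose pseudoinverse of `A` (the four Penrose conditions). -/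
def IsMoorePenrose {m n : Type} [Fintype m] [Fintype n]
    (A : Matrix m n ℝ) (X : Matrix n m ℝ) : Prop :=
  A * X * A = A ∧ X * A * X = X ∧ (A * X)ᵀ = A * X ∧ (X * A)ᵀ = X * A

/-- `μ` is an eigenvalue of the real matrix `M`. -/
def IsEigen {n : Type} [Fintype n] (M : Matrix n n ℝ) (μ : ℝ) : Prop :=
  ∃ x : n → ℝ, x ≠ 0 ∧ M *ᵥ x = μ • x

/-- The spectral gap of `M`: the infimum of its nonzero (real) eigenvalues. -/
noncomputable def specGap {n : Type} [Fintype n] (M : Matrix n n ℝ) : ℝ :=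
  sInf {μ : ℝ | μ ≠ 0 ∧ IsEigen M μ}

/-- The number of `d`-dimensional simplices of `K`. -/
def nface (K : SComplex V) (d : ℕ) : ℕ :=
  (K.faces.filter fun s => s.card = d + 1).card

/-- The weighted effective capacitance of `γ` for `L ⊆ K`: the infimum of potential
energies `‖δ[K] p‖²_W` over unit `γ`-potentials `p` of `L`. -/
noncomputable def SComplex.effCapW (K L : SComplex V) (d : ℕ)
    (w : SimpIdx V (d + 1) → ℝ) (γ : SimpIdx V d → ℝ) : ℝ :=
  sInf {E : ℝ | ∃ p : SimpIdx V d → ℝ, L.supportedOn p ∧ (L.bdry d)ᵀ *ᵥ p = 0 ∧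
    p ⬝ᵥ γ = 1 ∧ E = ∑ σ : SimpIdx V (d + 1), ((K.bdry d)ᵀ *ᵥ p) σ ^ 2 * w σ}

/-- Unweighted effective capacitance. -/
noncomputable def SComplex.effCap (K L : SComplex V) (d : ℕ) (γ : SimpIdx V d → ℝ) : ℝ :=
  K.effCapW L d (fun _ => 1) γ

/-- The relative integral boundary matrix `∂[L, L₀]`: entries are kept only for
simplices of `L` not in `L₀`. -/
def relBdryZ (L L₀ : SComplex V) (d : ℕ) :
    Matrix (SimpIdx V d) (SimpIdx V (d + 1)) ℤ :=
  fun τ σ => if (τ : Finset V) ∈ L.faces ∧ (τ : Finset V) ∉ L₀.faces ∧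
      (σ : Finset V) ∈ L.faces ∧ (σ : Finset V) ∉ L₀.faces then
    bsign (τ : Finset V) (σ : Finset V) else 0

/-- Kernel of the relative boundary map out of relative `d`-chains. -/
noncomputable def relKer (L L₀ : SComplex V) : (d : ℕ) → Submodule ℤ (SimpIdx V d → ℤ)
  | 0 => ⊤
  | (d + 1) => LinearMap.ker (Matrix.toLin' (relBdryZ L L₀ d))

/-- The cardinality of the torsion subgroup of the relative homology group
`H_d(L, L₀; ℤ)`. -/
noncomputable def relTorsionCard (L L₀ : SComplex V) (d : ℕ) : ℕ :=
  Nat.card (Submodule.torsion ℤ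
    (↥(relKer L L₀ d) ⧸ Submodule.comap (relKer L L₀ d).subtype
      (LinearMap.range (Matrix.toLin' (relBdryZ L L₀ d)))))
/-- The union of two simplicial complexes. -/
def SComplex.union {V : Type} [DecidableEq V] (K₁ K₂ : SComplex V) : SComplex V :=
  ⟨K₁.faces ∪ K₂.faces, by
    intro s hs t hts htne
    rcases Finset.mem_union.mp hs with h | h
    · exact Finset.mem_union_left _ (K₁.down_closed s h t hts htne)
    · exact Finset.mem_union_right _ (K₂.down_closed s h t hts htne)⟩

/-- `(σ, τ)` is a free (collapse) pair of `K`: `τ` is a codimension-one face of `σ`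
contained in no other face of `K` besides `τ` and `σ`. -/
def IsCollapsePair {V : Type} (K : SComplex V) (σ τ : Finset V) : Prop :=
  σ ∈ K.faces ∧ τ ∈ K.faces ∧ τ ⊆ σ ∧ τ.card + 1 = σ.card ∧
    ∀ ρ ∈ K.faces, τ ⊆ ρ → ρ = τ ∨ ρ = σ

/-- `K'` is obtained from `K` by one elementary collapse. -/
def ElemCollapse {V : Type} [DecidableEq V] (K K' : SComplex V) : Prop :=
  ∃ σ τ : Finset V, IsCollapsePair K σ τ ∧ K'.faces = K.faces \ {σ, τ}

/-- `K` collapses to `L` via a (possibly empty) sequence of elementary collapses. -/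
def CollapsesTo {V : Type} [DecidableEq V] (K L : SComplex V) : Prop :=
  Relation.ReflTransGen ElemCollapse K L

/-- Inserting a single simplex, all of whose proper faces are already present,
into a simplicial complex. -/
def insertSimplex {V : Type} [DecidableEq V] (L : SComplex V) (s : Finset V)
    (h : ∀ t ⊆ s, t.Nonempty → t ≠ s → t ∈ L.faces) : SComplex V :=
  ⟨insert s L.faces, by
    intro a ha t hts htne
    rcases Finset.mem_insert.mp ha with rfl | ha
    · by_cases hts' : t = a
      · exact hts' ▸ Finset.mem_insert_self _ _
      · exact Finset.mem_insert_of_mem (h t hts htne hts')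
    · exact Finset.mem_insert_of_mem (L.down_closed a ha t hts htne)⟩

/-- The weighted degree of a `d`-simplex `σ` in `K`: the total weight of the
`(d+1)`-simplices of `K` containing it. -/
noncomputable def degW {V : Type} [Fintype V] [LinearOrder V] (K : SComplex V) (d : ℕ)
    (w : SimpIdx V (d + 1) → ℝ) (σ : SimpIdx V d) : ℝ :=
  ∑ τ : SimpIdx V (d + 1),
    if (σ : Finset V) ⊆ (τ : Finset V) ∧ (τ : Finset V) ∈ K.faces then w τ else 0

set_option linter.unusedSectionVars false

/-! ### The Clifford operator `∂ + δ` -/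

/-- The sign `(-1) ^ #{w ∈ S | w < v}`. It does not depend on whether `v ∈ S`, so the same sign
serves for inserting `v` into `S` and for deleting it. -/
def sg (v : V) (S : Finset V) : ℝ := ∏ w ∈ S, if w < v then -1 else 1

lemma sg_symmDiff (v w : V) (S : Finset V) :
    sg w (symmDiff S {v}) = sg w S * if v < w then -1 else 1 := by
  unfold sg
  by_cases hv : v ∈ S
  · have h : symmDiff S {v} = S.erase v := by
      ext x; simp only [Finset.mem_symmDiff, Finset.mem_singleton, Finset.mem_erase]; grind
    rw [h, ← Finset.mul_prod_erase S _ hv]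
    split_ifs <;> ring
  · have h : symmDiff S {v} = insert v S := by
      ext x; simp only [Finset.mem_symmDiff, Finset.mem_singleton, Finset.mem_insert]; grind
    rw [h, Finset.prod_insert hv, mul_comm]

lemma sg_mul_self (v : V) (S : Finset V) : sg v S * sg v S = 1 := by
  unfold sg
  rw [← Finset.prod_mul_distrib]
  apply Finset.prod_eq_one
  intro w _
  split_ifs <;> norm_num

/-- The operator `∂ + δ` on functions on all finite vertex sets, restricted to the vertices in `U`:
the boundary of the full simplex on `U`, augmented by the empty face, plus its transpose. It is
Clifford multiplication by `∑ v ∈ U, e_v` in the exterior algebra, since each summand toggles `v`. -/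
def cliff (U : Finset V) (f : Finset V → ℝ) (S : Finset V) : ℝ :=
  ∑ v ∈ U, sg v S * f (symmDiff S {v})

/-- Clifford relation `(∂ + δ)² = |U|`: toggling the same vertex twice is the identity, and toggles
of distinct vertices anticommute. -/
lemma cliff_cliff (U : Finset V) (f : Finset V → ℝ) (S : Finset V) :
    cliff U (cliff U f) S = U.card * f S := by
  set t : V → V → ℝ := fun v w =>
    sg v S * (sg w (symmDiff S {v}) * f (symmDiff (symmDiff S {v}) {w})) with ht
  have key : ∀ v w, t v w + t w v = if v = w then 2 * f S else 0 := by
    intro v w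
    simp only [ht, sg_symmDiff]
    rcases lt_trichotomy v w with h | h | h
    · rw [symmDiff_right_comm S {w} {v}]
      simp only [h, h.not_gt, h.ne, if_true, if_false]; ring
    · subst h
      simp only [lt_irrefl, if_false, if_true, symmDiff_symmDiff_cancel_right]
      linear_combination 2 * f S * sg_mul_self v S
    · rw [symmDiff_right_comm S {w} {v}]
      simp only [h, h.not_gt, h.ne', if_true, if_false]; ring
  have hT : cliff U (cliff U f) S = ∑ v ∈ U, ∑ w ∈ U, t v w := by
    simp only [cliff, Finset.mul_sum, ht]
  -- Symmetrize the double sum in `(v, w)`, so that only the diagonal terms survive.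
  have h2 : (∑ v ∈ U, ∑ w ∈ U, t v w) + ∑ v ∈ U, ∑ w ∈ U, t v w = 2 * (U.card * f S) := by
    nth_rewrite 2 [Finset.sum_comm]
    simp only [← Finset.sum_add_distrib, key]
    simp
    ring
  rw [hT]; linarith

lemma cliff_symm (U : Finset V) (f g : Finset V → ℝ) :
    ∑ S, cliff U f S * g S = ∑ S, f S * cliff U g S := by
  simp only [cliff, Finset.sum_mul, Finset.mul_sum]
  rw [Finset.sum_comm, Finset.sum_comm (s := Finset.univ)]
  refine Finset.sum_congr rfl fun v _ => ?_
  refine Finset.sum_bij' (fun S _ => symmDiff S {v}) (fun S _ => symmDiff S {v}) ?_ ?_ ?_ ?_ ?_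
  · simp
  · simp
  · simp
  · simp
  · intro S _
    simp only [sg_symmDiff, symmDiff_symmDiff_cancel_right, lt_irrefl, if_false]
    ring

lemma cliff_sq (U : Finset V) (f : Finset V → ℝ) :
    ∑ S, cliff U f S ^ 2 = U.card * ∑ S, f S ^ 2 := by
  have h := cliff_symm U f (cliff U f)
  simp only [cliff_cliff] at h
  simp only [sq, h, Finset.mul_sum]
  exact Finset.sum_congr rfl fun S _ => by ring

/-! ### Boundary and coboundary maps -/

/-- Extension by zero of a `d`-chain to all finite vertex sets. -/
def ext0 {d : ℕ} (p : SimpIdx V d → ℝ) (S : Finset V) : ℝ :=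
  if h : S.card = d + 1 then p ⟨S, h⟩ else 0

lemma ext0_coe {d : ℕ} (p : SimpIdx V d → ℝ) (s : SimpIdx V d) : ext0 p s = p s := by
  simp [ext0, s.2]

lemma ext0_of_ne {d : ℕ} (p : SimpIdx V d → ℝ) {S : Finset V} (h : S.card ≠ d + 1) :
    ext0 p S = 0 := by
  simp [ext0, h]

/-- A sum over `d`-simplices as a sum over all vertex sets; `F S 0 = 0` makes the added terms
vanish. -/
lemma sum_ext0 {d : ℕ} (p : SimpIdx V d → ℝ) (F : Finset V → ℝ → ℝ) (hF : ∀ S, F S 0 = 0) :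
    ∑ s : SimpIdx V d, F s (p s) = ∑ S, F S (ext0 p S) := by
  have h1 : ∑ S, F S (ext0 p S) =
      ∑ S ∈ Finset.univ.filter (fun S : Finset V => S.card = d + 1), F S (ext0 p S) := by
    symm
    apply Finset.sum_subset (Finset.subset_univ _)
    intro S _ hS
    rw [ext0_of_ne p (by simpa using hS), hF]
  rw [h1, Finset.sum_subtype (p := fun S : Finset V => S.card = d + 1) _ (by simp)]
  exact Finset.sum_congr rfl fun s _ => by rw [ext0_coe]

lemma bsign_erase {S : Finset V} {v : V} (hv : v ∈ S) :
    ((bsign (S.erase v) S : ℤ) : ℝ) = sg v S := by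
  have h1 : S \ S.erase v = {v} := Finset.sdiff_erase_self hv
  have h2 : (S.erase v).card + 1 = S.card := Finset.card_erase_add_one hv
  unfold bsign sg
  rw [if_pos ⟨Finset.erase_subset _ _, h2⟩, h1, Finset.prod_ite]
  simp

lemma card_symmDiff_singleton (S : Finset V) (v : V) :
    (v ∈ S ∧ symmDiff S {v} = S.erase v ∧ (symmDiff S {v}).card + 1 = S.card) ∨
    (v ∉ S ∧ (symmDiff S {v}).card = S.card + 1) := by
  by_cases hv : v ∈ S
  · have h : symmDiff S {v} = S.erase v := by
      ext x; simp only [Finset.mem_symmDiff, Finset.mem_singleton, Finset.mem_erase]; grind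
    exact Or.inl ⟨hv, h, by rw [h]; exact Finset.card_erase_add_one hv⟩
  · have h : symmDiff S {v} = insert v S := by
      ext x; simp only [Finset.mem_symmDiff, Finset.mem_singleton, Finset.mem_insert]; grind
    exact Or.inr ⟨hv, by rw [h, Finset.card_insert_of_notMem hv]⟩

/-- On a `(d+1)`-simplex inside `U`, the coboundary of a `d`-chain `p` is the value of `∂ + δ` on
the extension of `p`: toggling a vertex outside the simplex gives `d + 3` vertices, where the
extension vanishes. -/
lemma cobdry_eq_cliff {d : ℕ} (U : Finset V) (p : SimpIdx V d → ℝ) (s : SimpIdx V (d + 1))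
    (hs : (s : Finset V) ⊆ U) : ((gbdry V d)ᵀ *ᵥ p) s = cliff U (ext0 p) s := by
  obtain ⟨S, hS⟩ := s
  have hl : ((gbdry V d)ᵀ *ᵥ p) ⟨S, hS⟩ = ∑ T, ((bsign T S : ℤ) : ℝ) * ext0 p T := by
    rw [← sum_ext0 p (fun T x => ((bsign T S : ℤ) : ℝ) * x) (by simp)]
    rfl
  have hr : cliff U (ext0 p) S = ∑ v ∈ S, sg v S * ext0 p (S.erase v) := by
    unfold cliff
    rw [← Finset.sum_subset hs]
    · refine Finset.sum_congr rfl fun v hv => ?_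
      rcases card_symmDiff_singleton S v with ⟨_, h, _⟩ | ⟨h, _⟩
      · rw [h]
      · exact absurd hv h
    · intro v _ hv
      rcases card_symmDiff_singleton S v with ⟨h, _, _⟩ | ⟨_, h⟩
      · exact absurd h hv
      · rw [ext0_of_ne p (by omega), mul_zero]
  rw [hl, hr]
  have hinj : Set.InjOn (fun v => S.erase v) (S : Set V) := Finset.erase_injOn S
  rw [← Finset.sum_subset (Finset.subset_univ (S.image fun v => S.erase v)),
    Finset.sum_image hinj]
  · exact Finset.sum_congr rfl fun v hv => by rw [bsign_erase hv]
  · intro T _ hT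
    have : bsign T S = 0 := by
      unfold bsign
      rw [if_neg]
      rintro ⟨h1, h2⟩
      apply hT
      obtain ⟨v, hv⟩ := Finset.card_eq_one.mp
        (show (S \ T).card = 1 by rw [Finset.card_sdiff_of_subset h1]; omega)
      have hvS : v ∈ S \ T := by rw [hv]; simp
      refine Finset.mem_image.mpr ⟨v, (Finset.mem_sdiff.mp hvS).1, ?_⟩
      rw [Finset.erase_eq, ← hv, Finset.sdiff_sdiff_eq_self h1]
    simp [this]

/-- `δ ∘ δ = 0`. Evaluated on a `(d+2)`-simplex, `(∂ + δ)² p` is `δ (δ p)`, whereas `(∂ + δ)²` is a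
scalar and `p` has no component in dimension `d + 2`. -/
lemma cobdry_cobdry {d : ℕ} (p : SimpIdx V d → ℝ) :
    (gbdry V (d + 1))ᵀ *ᵥ ((gbdry V d)ᵀ *ᵥ p) = 0 := by
  funext s
  rw [cobdry_eq_cliff Finset.univ _ s (Finset.subset_univ _)]
  have h := cliff_cliff Finset.univ (ext0 p) (s : Finset V)
  rw [ext0_of_ne p (by rw [s.2]; omega), mul_zero] at h
  rw [Pi.zero_apply, ← h]
  unfold cliff
  refine Finset.sum_congr rfl fun v _ => ?_
  congr 1
  rcases card_symmDiff_singleton (s : Finset V) v with ⟨_, _, hc⟩ | ⟨_, hc⟩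
  · have hc' : (symmDiff (s : Finset V) {v}).card = d + 1 + 1 := by have := s.2; omega
    have := cobdry_eq_cliff Finset.univ p ⟨_, hc'⟩ (Finset.subset_univ _)
    simp only [ext0, hc', dif_pos]
    exact this
  · have := s.2
    rw [ext0_of_ne _ (by omega)]
    symm
    apply Finset.sum_eq_zero
    intro w _
    rw [ext0_of_ne p, mul_zero]
    rcases card_symmDiff_singleton (symmDiff (s : Finset V) {v}) w with ⟨_, _, h⟩ | ⟨_, h⟩ <;> omega

lemma gbdry_mul_gbdry (d : ℕ) : gbdry V d * gbdry V (d + 1) = 0 := by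
  have h : (gbdry V (d + 1))ᵀ * (gbdry V d)ᵀ = 0 := by
    apply Matrix.ext_of_mulVec_single
    intro i
    rw [← Matrix.mulVec_mulVec, cobdry_cobdry, Matrix.zero_mulVec]
  rw [← Matrix.transpose_mul, Matrix.transpose_eq_zero] at h
  exact h

/-- By downward closure, the row restriction in `∂[K]` is redundant. -/
lemma SComplex.bdry_eq (K : SComplex V) (d : ℕ) : K.bdry d = gbdry V d * K.ind (d + 1) := by
  ext τ s
  simp only [SComplex.bdry, SComplex.ind, Matrix.mul_diagonal, Matrix.diagonal_mul]
  by_cases hs : (s : Finset V) ∈ K.faces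
  · by_cases hτ : (τ : Finset V) ∈ K.faces
    · simp [hτ]
    · have : gbdry V d τ s = 0 := by
        simp only [gbdry, gbdryZ, Matrix.map_apply, bsign]
        rw [if_neg, Int.cast_zero]
        rintro ⟨h, -⟩
        exact hτ (K.down_closed _ hs _ h (Finset.card_pos.mp (by rw [τ.2]; omega)))
      simp [this]
  · simp [hs]

lemma SComplex.bdry_mul_bdry (K : SComplex V) (d : ℕ) : K.bdry d * K.bdry (d + 1) = 0 := by
  have h : K.bdry d * K.bdry (d + 1) = gbdry V d * (K.ind (d + 1) * gbdry V (d + 1) *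
      K.ind (d + 2)) := by
    have hi : K.ind (d + 1) * K.ind (d + 1) = K.ind (d + 1) := by
      simp [SComplex.ind, Matrix.diagonal_mul_diagonal]
    conv_lhs => rw [K.bdry_eq d, SComplex.bdry]
    rw [Matrix.mul_assoc (gbdry V d), ← Matrix.mul_assoc (K.ind (d+1)),
      ← Matrix.mul_assoc (K.ind (d+1)), hi]
  rw [h]
  change gbdry V d * K.bdry (d + 1) = 0
  rw [K.bdry_eq, ← Matrix.mul_assoc, gbdry_mul_gbdry, Matrix.zero_mul]

lemma SComplex.cobdry_apply (K : SComplex V) {d : ℕ} (p : SimpIdx V d → ℝ)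
    (s : SimpIdx V (d + 1)) :
    ((K.bdry d)ᵀ *ᵥ p) s =
      if (s : Finset V) ∈ K.faces then ((gbdry V d)ᵀ *ᵥ p) s else 0 := by
  rw [K.bdry_eq, Matrix.transpose_mul, ← Matrix.mulVec_mulVec, SComplex.ind,
    Matrix.diagonal_transpose, Matrix.mulVec_diagonal]
  split_ifs <;> simp

/-- The largest singular value of `δ[K]` is at most `√n₀`. With `U` the vertices of `K`, the values of
`δ[K] p` are among those of `(∂ + δ) p`, whose squared norm is `|U| ‖p‖²`. -/
lemma SComplex.cobdry_energy_le (K : SComplex V) {d : ℕ} (p : SimpIdx V d → ℝ) :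
    ∑ s, ((K.bdry d)ᵀ *ᵥ p) s ^ 2 ≤ (nface K 0 : ℝ) * (p ⬝ᵥ p) := by
  set U : Finset V := Finset.univ.filter fun v => ({v} : Finset V) ∈ K.faces with hU
  have hcard : U.card ≤ nface K 0 := by
    apply Finset.card_le_card_of_injOn (fun v => ({v} : Finset V))
    · intro v hv
      simpa [hU] using hv
    · intro v _ w _ h
      exact Finset.singleton_injective h
  have hsub : ∀ s ∈ K.faces, s ⊆ U := by
    intro s hs v hv
    simp only [hU, Finset.mem_filter, Finset.mem_univ, true_and]
    exact K.down_closed s hs _ (by simpa using hv) (Finset.singleton_nonempty v)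
  calc ∑ s, ((K.bdry d)ᵀ *ᵥ p) s ^ 2
      ≤ ∑ s : SimpIdx V (d + 1), cliff U (ext0 p) s ^ 2 := by
        refine Finset.sum_le_sum fun s _ => ?_
        rw [K.cobdry_apply]
        split_ifs with h
        · rw [cobdry_eq_cliff U p s (hsub _ h)]
        · simpa using sq_nonneg _
    _ ≤ ∑ S, cliff U (ext0 p) S ^ 2 := by
        rw [← Finset.sum_subtype (Finset.univ.filter fun S : Finset V => S.card = d + 1 + 1)
          (by simp) (fun S => cliff U (ext0 p) S ^ 2)]
        exact Finset.sum_le_sum_of_subset_of_nonneg (Finset.subset_univ _)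
          fun _ _ _ => sq_nonneg _
    _ = U.card * (p ⬝ᵥ p) := by
        rw [cliff_sq, ← sum_ext0 p (fun _ x => x ^ 2) (by simp)]
        simp only [dotProduct, sq]
    _ ≤ (nface K 0 : ℝ) * (p ⬝ᵥ p) := by
        have : 0 ≤ p ⬝ᵥ p := by simpa using dotProduct_star_self_nonneg p
        gcongr

/-! ### Linear algebra -/

/-- Rayleigh bound: for a positive semidefinite `N` and a nonzero `p` orthogonal to `ker N`,
`specGap N` is a positive lower bound for the Rayleigh quotient at `p`. The existence of `p` shows
that `N` has a nonzero eigenvalue, so that the infimum defining `specGap` is over a nonempty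
set. -/
lemma specGap_bound {n : Type} [Fintype n] (N : Matrix n n ℝ)
    (hN : N.PosSemidef) (p : n → ℝ) (hp : p ≠ 0) (hk : ∀ b, N *ᵥ b = 0 → b ⬝ᵥ p = 0) :
    0 < specGap N ∧ specGap N * (p ⬝ᵥ p) ≤ p ⬝ᵥ (N *ᵥ p) := by
  classical
  have hH := hN.isHermitian
  set b : n → n → ℝ := fun i => ⇑(hH.eigenvectorBasis i) with hb
  have hNb : ∀ i, N *ᵥ b i = hH.eigenvalues i • b i := fun i => hH.mulVec_eigenvectorBasis i
  have hb0 : ∀ i, b i ≠ 0 := by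
    intro i h
    have h1 := hH.eigenvectorBasis.orthonormal.ne_zero i
    exact h1 (by ext j; exact congrFun h j)
  have hpar : ∀ x y : n → ℝ, x ⬝ᵥ y = ∑ i, (b i ⬝ᵥ x) * (b i ⬝ᵥ y) := by
    intro x y
    have h := hH.eigenvectorBasis.sum_inner_mul_inner (WithLp.toLp 2 x) (WithLp.toLp 2 y)
    simp only [EuclideanSpace.inner_eq_star_dotProduct] at h
    simp only [star_trivial] at h
    rw [dotProduct_comm, ← h]
    refine Finset.sum_congr rfl fun i _ => ?_
    congr 1
    exact dotProduct_comm _ _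
  have hbN : ∀ i, b i ⬝ᵥ (N *ᵥ p) = hH.eigenvalues i * (b i ⬝ᵥ p) := by
    intro i
    have hT : Nᵀ = N := by simpa [Matrix.IsHermitian] using hH
    rw [Matrix.dotProduct_mulVec, ← Matrix.mulVec_transpose, hT, hNb, smul_dotProduct, smul_eq_mul]
  set T : Set ℝ := {μ : ℝ | μ ≠ 0 ∧ IsEigen N μ} with hTdef
  have hpos : ∀ μ ∈ T, 0 < μ := by
    rintro μ ⟨h0, x, hx, hxe⟩
    have h1 := hN.dotProduct_mulVec_nonneg x
    rw [hxe] at h1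
    simp only [star_trivial, dotProduct_smul, smul_eq_mul] at h1
    have h2 : 0 < x ⬝ᵥ x := by simpa using dotProduct_star_self_pos_iff.mpr hx
    exact lt_of_le_of_ne (nonneg_of_mul_nonneg_left h1 h2) (Ne.symm h0)
  have hfin : T.Finite := by
    refine (Module.End.finite_hasEigenvalue (Matrix.toLin' N)).subset ?_
    rintro μ ⟨-, x, hx, hxe⟩
    exact Module.End.hasEigenvalue_of_hasEigenvector
      (Module.End.hasEigenvector_iff.mpr ⟨Module.End.mem_eigenspace_iff.mpr (by simpa using hxe), hx⟩)
  have hmem : ∀ i, b i ⬝ᵥ p ≠ 0 → hH.eigenvalues i ∈ T := by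
    intro i hi
    refine ⟨fun h => hi (hk _ ?_), b i, hb0 i, hNb i⟩
    rw [hNb, h, zero_smul]
  have hne : T.Nonempty := by
    by_contra hT
    apply hp
    rw [← dotProduct_self_eq_zero, hpar]
    refine Finset.sum_eq_zero fun i _ => ?_
    by_cases hi : b i ⬝ᵥ p = 0
    · simp [hi]
    · exact absurd ⟨_, hmem i hi⟩ hT
  refine ⟨hpos _ (hne.csInf_mem hfin), ?_⟩
  rw [hpar p p, hpar p (N *ᵥ p), Finset.mul_sum]
  refine Finset.sum_le_sum fun i _ => ?_
  rw [hbN]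
  by_cases hi : b i ⬝ᵥ p = 0
  · simp [hi]
  · have h1 : specGap N ≤ hH.eigenvalues i :=
      csInf_le ⟨0, fun μ hμ => (hpos μ hμ).le⟩ (hmem i hi)
    nlinarith [mul_self_nonneg (b i ⬝ᵥ p)]

/-- The normal equations of the least-squares problem `A f ≈ g` are solvable. -/
lemma exists_residual {m n : Type} [Fintype m] [Fintype n] (A : Matrix m n ℝ) (g : m → ℝ) :
    ∃ f : n → ℝ, Aᵀ *ᵥ (g - A *ᵥ f) = 0 := by
  classical
  set R := LinearMap.range (Matrix.toEuclideanLin A) with hR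
  obtain ⟨f, hf⟩ : R.starProjection (WithLp.toLp 2 g) ∈ R := Submodule.starProjection_apply_mem _ _
  refine ⟨f.ofLp, ?_⟩
  -- The residual `r` is orthogonal to `A Aᵀ r`, so `‖Aᵀ r‖² = 0`.
  rw [← dotProduct_self_eq_zero]
  set r := g - A *ᵥ f.ofLp with hr
  have h := Submodule.starProjection_inner_eq_zero (K := R) (WithLp.toLp 2 g)
    (Matrix.toEuclideanLin A (WithLp.toLp 2 (Aᵀ *ᵥ r))) ⟨_, rfl⟩
  rw [← hf, EuclideanSpace.inner_eq_star_dotProduct] at h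
  simp only [star_trivial] at h
  change (A *ᵥ (Aᵀ *ᵥ r)) ⬝ᵥ r = 0 at h
  rw [dotProduct_comm, Matrix.dotProduct_mulVec, ← Matrix.mulVec_transpose] at h
  exact h

/-! ### The spectral gap and the potential -/

lemma SComplex.downLap_mulVec_bdry (M : SComplex V) (d : ℕ) (f : SimpIdx V (d + 1) → ℝ) :
    M.downLap d *ᵥ (M.bdry d *ᵥ f) = 0 := by
  cases d with
  | zero => simp [SComplex.downLap]
  | succ d =>
    simp only [SComplex.downLap]
    rw [Matrix.mulVec_mulVec, Matrix.mul_assoc, M.bdry_mul_bdry, Matrix.mul_zero,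
      Matrix.zero_mulVec]

lemma SComplex.downLap_posSemidef (M : SComplex V) (d : ℕ) : (M.downLap d).PosSemidef := by
  cases d with
  | zero => exact Matrix.PosSemidef.zero
  | succ d =>
    simpa [SComplex.downLap] using Matrix.posSemidef_conjTranspose_mul_self (M.bdry d)

lemma SComplex.upLap_posSemidef (M : SComplex V) (d : ℕ) : (M.upLap d).PosSemidef := by
  simpa [SComplex.upLap] using Matrix.posSemidef_self_mul_conjTranspose (M.bdry d)

lemma SComplex.dotProduct_upLap (M : SComplex V) (d : ℕ) (x : SimpIdx V d → ℝ) :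
    x ⬝ᵥ (M.upLap d *ᵥ x) = ∑ s, ((M.bdry d)ᵀ *ᵥ x) s ^ 2 := by
  rw [SComplex.upLap, ← Matrix.mulVec_mulVec, Matrix.dotProduct_mulVec,
    ← Matrix.mulVec_transpose]
  simp only [dotProduct, sq]

/-- On the image of `∂[M]` the down-Laplacian vanishes, and this image is orthogonal to the kernel of
the combinatorial Laplacian, so the spectral gap bounds `‖δ[M] p‖²` from below. -/
lemma SComplex.specGap_combLap_bound (M : SComplex V) (d : ℕ) (f : SimpIdx V (d + 1) → ℝ)
    (p : SimpIdx V d → ℝ) (hpf : p = M.bdry d *ᵥ f) (hp : p ≠ 0) :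
    0 < specGap (M.combLap d) ∧
      specGap (M.combLap d) * (p ⬝ᵥ p) ≤ ∑ s, ((M.bdry d)ᵀ *ᵥ p) s ^ 2 := by
  have hk : ∀ b, M.combLap d *ᵥ b = 0 → b ⬝ᵥ p = 0 := by
    intro b hb
    have h1 : b ⬝ᵥ (M.upLap d *ᵥ b) + b ⬝ᵥ (M.downLap d *ᵥ b) = 0 := by
      rw [← dotProduct_add, ← Matrix.add_mulVec]
      change b ⬝ᵥ (M.combLap d *ᵥ b) = 0
      rw [hb, dotProduct_zero]
    have h2 : 0 ≤ b ⬝ᵥ (M.downLap d *ᵥ b) := by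
      simpa using (M.downLap_posSemidef d).dotProduct_mulVec_nonneg b
    rw [M.dotProduct_upLap] at h1
    have h3 : ∑ s, ((M.bdry d)ᵀ *ᵥ b) s ^ 2 = 0 :=
      le_antisymm (by linarith) (Finset.sum_nonneg fun _ _ => sq_nonneg _)
    have h4 : (M.bdry d)ᵀ *ᵥ b = 0 := by
      funext s
      have := (Finset.sum_eq_zero_iff_of_nonneg fun s _ => sq_nonneg _).mp h3 s (Finset.mem_univ s)
      simpa using this
    rw [hpf, Matrix.dotProduct_mulVec, ← Matrix.mulVec_transpose, h4, zero_dotProduct]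
  have h := specGap_bound (M.combLap d)
    ((M.upLap_posSemidef d).add (M.downLap_posSemidef d)) p hp hk
  refine ⟨h.1, h.2.trans_eq ?_⟩
  rw [SComplex.combLap, Matrix.add_mulVec, dotProduct_add, M.dotProduct_upLap]
  conv_lhs => rw [hpf, M.downLap_mulVec_bdry, dotProduct_zero, add_zero]
  rw [hpf]

/-- A unit `γ`-potential of `L` in the image of `∂[L ∪ {σ}]`: the component of `γ = ∂σ` orthogonal to
the image of `∂[L]`, rescaled. It is nonzero because `γ` does not bound in `L`. -/
lemma SComplex.exists_residual_potential (L : SComplex V) (d : ℕ) (σ : SimpIdx V (d + 1))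
    (hfaces : ∀ t ⊆ (σ : Finset V), t.Nonempty → t ≠ (σ : Finset V) → t ∈ L.faces)
    (γ : SimpIdx V d → ℝ) (hγ : γ = fun τ : SimpIdx V d => ((bsign (τ : Finset V) (σ : Finset V) : ℤ) : ℝ))
    (hL : ¬ L.NullHomologous d γ) :
    ∃ p : SimpIdx V d → ℝ, L.supportedOn p ∧ (L.bdry d)ᵀ *ᵥ p = 0 ∧ p ⬝ᵥ γ = 1 ∧
      ∃ f, p = (insertSimplex L (σ : Finset V) hfaces).bdry d *ᵥ f := by
  set M := insertSimplex L (σ : Finset V) hfaces with hM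
  obtain ⟨f, hf⟩ := exists_residual (L.bdry d) γ
  set r := γ - L.bdry d *ᵥ f with hr
  have hindL : L.supportedOn (L.ind (d + 1) *ᵥ f) := by
    intro s hs
    by_contra h
    exact hs (by simp [SComplex.ind, Matrix.mulVec_diagonal, h])
  have hr0 : r ≠ 0 := by
    intro h
    refine hL ⟨L.ind (d + 1) *ᵥ f, hindL, ?_⟩
    rw [Matrix.mulVec_mulVec, ← L.bdry_eq]
    exact (sub_eq_zero.mp h).symm
  have hrr : 0 < r ⬝ᵥ r := by simpa using dotProduct_star_self_pos_iff.mpr hr0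
  have hrγ : r ⬝ᵥ γ = r ⬝ᵥ r := by
    have h1 : r ⬝ᵥ (L.bdry d *ᵥ f) = 0 := by
      rw [Matrix.dotProduct_mulVec, ← Matrix.mulVec_transpose, hf, zero_dotProduct]
    conv_rhs => rw [hr, dotProduct_sub, ← hr, h1, sub_zero]
  have hγM : γ = M.bdry d *ᵥ Pi.single σ 1 := by
    funext τ
    rw [M.bdry_eq, Matrix.mulVec_single_one, Matrix.col_apply, SComplex.ind, Matrix.mul_diagonal]
    simp [hγ, hM, insertSimplex, gbdry, gbdryZ]
  have hLM : L.bdry d *ᵥ f = M.bdry d *ᵥ (L.ind (d + 1) *ᵥ f) := by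
    rw [Matrix.mulVec_mulVec, L.bdry_eq, M.bdry_eq, Matrix.mul_assoc]
    congr 2
    simp only [SComplex.ind, Matrix.diagonal_mul_diagonal]
    congr 1
    funext s
    by_cases h : (s : Finset V) ∈ L.faces
    · simp [h, hM, insertSimplex]
    · simp [h]
  refine ⟨(r ⬝ᵥ r)⁻¹ • r, ?_, ?_, ?_, (r ⬝ᵥ r)⁻¹ • (Pi.single σ 1 - L.ind (d + 1) *ᵥ f), ?_⟩
  · intro τ hτ
    by_contra h
    apply hτ
    have h1 : γ τ = 0 := by
      have : bsign (τ : Finset V) (σ : Finset V) = 0 := by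
        rw [bsign, if_neg]
        rintro ⟨h1, h2⟩
        refine h (hfaces _ h1 (Finset.card_pos.mp (by rw [τ.2]; omega)) ?_)
        intro h3
        rw [h3] at h2
        omega
      simp [hγ, this]
    have h2 : (L.bdry d *ᵥ f) τ = 0 := by
      rw [SComplex.bdry, Matrix.mul_assoc, ← Matrix.mulVec_mulVec, SComplex.ind,
        Matrix.mulVec_diagonal]
      simp [h]
    simp [hr, h1, h2]
  · rw [Matrix.mulVec_smul, hf, smul_zero]
  · rw [smul_dotProduct, hrγ, smul_eq_mul, inv_mul_cancel₀ hrr.ne']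
  · rw [Matrix.mulVec_smul, Matrix.mulVec_sub, ← hγM, ← hLM]

/-- The coboundary in `L ∪ {σ}` of a unit `∂σ`-potential of `L` is the indicator of `σ`, so it has
energy `1`. -/
lemma SComplex.insertSimplex_energy (L : SComplex V) (d : ℕ) (σ : SimpIdx V (d + 1))
    (hfaces : ∀ t ⊆ (σ : Finset V), t.Nonempty → t ≠ (σ : Finset V) → t ∈ L.faces)
    (p : SimpIdx V d → ℝ) (hp : (L.bdry d)ᵀ *ᵥ p = 0)
    (h1 : p ⬝ᵥ (fun τ => ((bsign (τ : Finset V) (σ : Finset V) : ℤ) : ℝ)) = 1) :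
    ∑ s, (((insertSimplex L (σ : Finset V) hfaces).bdry d)ᵀ *ᵥ p) s ^ 2 = 1 := by
  rw [Finset.sum_eq_single σ]
  · have : ((gbdry V d)ᵀ *ᵥ p) σ = 1 := by
      rw [← h1, dotProduct_comm]; rfl
    rw [SComplex.cobdry_apply, this]
    simp [insertSimplex]
  · intro s _ hs
    rw [SComplex.cobdry_apply]
    have hne : (s : Finset V) ≠ σ := fun h => hs (Subtype.ext h)
    have h2 := congrFun hp s
    rw [SComplex.cobdry_apply] at h2
    by_cases h : (s : Finset V) ∈ L.faces
    · rw [if_pos h] at h2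
      simp [h2]
    · simp [insertSimplex, h, hne]
  · simp

/-- **Effective capacitance bounded by the spectral gap.** There is a constant
`C > 0` such that for all `(d+1)`-dimensional simplicial complexes `L ⊆ K` and
every `(d+1)`-simplex `σ ∉ L` all of whose proper faces lie in `L`, if `γ = ∂σ` is
null-homologous in `K` but not in `L`, then the effective capacitance satisfies
`C_γ(L, K) ≤ C · n₀ · λmin(L_{comb}[L ∪ {σ}])⁻¹`, where `n₀` is the number of
vertices of `K` and `λmin` the spectral gap of the combinatorial Laplacian. -/
theorem effective_capacitance_le_spectral_gap_bound :
    ∃ C : ℝ, 0 < C ∧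
      ∀ (V : Type) [Fintype V] [LinearOrder V] (K L : SComplex V) (d : ℕ),
      L.faces ⊆ K.faces →
      (∀ s ∈ K.faces, s.card ≤ d + 2) →
      ∀ (σ : SimpIdx V (d + 1)), (σ : Finset V) ∉ L.faces →
      ∀ (hfaces : ∀ t ⊆ (σ : Finset V), t.Nonempty → t ≠ (σ : Finset V) → t ∈ L.faces),
      K.NullHomologous d (fun τ => ((bsign (τ : Finset V) (σ : Finset V) : ℤ) : ℝ)) →
      ¬ L.NullHomologous d (fun τ => ((bsign (τ : Finset V) (σ : Finset V) : ℤ) : ℝ)) →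
      K.effCap L d (fun τ => ((bsign (τ : Finset V) (σ : Finset V) : ℤ) : ℝ)) ≤
        C * ((nface K 0 : ℕ) : ℝ) *
          (specGap ((insertSimplex L (σ : Finset V) hfaces).combLap d))⁻¹ := by
  refine ⟨1, one_pos, ?_⟩
  intro V _ _ K L d _ _ σ _ hfaces _ hL
  obtain ⟨p, hps, hp0, hp1, f, hpf⟩ :=
    L.exists_residual_potential d σ hfaces _ rfl hL
  have hpne : p ≠ 0 := by
    rintro rfl
    simp at hp1
  obtain ⟨hpos, hgap⟩ := SComplex.specGap_combLap_bound _ d f p hpf hpne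
  rw [L.insertSimplex_energy d σ hfaces p hp0 hp1] at hgap
  have hnorm : p ⬝ᵥ p ≤ (specGap ((insertSimplex L (σ : Finset V) hfaces).combLap d))⁻¹ := by
    rw [← one_div, le_div_iff₀ hpos, mul_comm]
    exact hgap
  calc K.effCap L d _ ≤ ∑ s, ((K.bdry d)ᵀ *ᵥ p) s ^ 2 := by
        refine csInf_le ⟨0, ?_⟩ ⟨p, hps, hp0, hp1, by simp⟩
        rintro E ⟨q, -, -, -, rfl⟩
        exact Finset.sum_nonneg fun s _ => mul_nonneg (sq_nonneg _) zero_le_one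
    _ ≤ (nface K 0 : ℝ) * (p ⬝ᵥ p) := K.cobdry_energy_le p
    _ ≤ _ := by
        rw [one_mul]
        gcongr
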